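/- arXiv:2006.11789 — 8 statements merged into one kernel-verified Lean document; each statement's English description precedes it below -/
import Mathlib

section
/- Let σ₁, σ₂ be switching signals of length T+1 with σ₁ ⪯ σ₂. Suppose there exists t₁ ≤ T such that O_{σ₁}(t₁) has full column rank n, and let t_{σ₁} be the least such time. Then there exists t₂ ≤ t_{σ₁} such that O_{σ₂}(t₂) has full column rank n, and the least such time t_{σ₂} satisfies t_{σ₂} ≤ t_{σ₁}. (The first time at which the initial state can be estimated is antitone in the partial order on switching signals.) -/
open Matrix
open scoped Classical

/-- The observability matrix `O_σ(t)` of `(A, C)` under the (ℕ-indexed) switching signal `σ`: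
the `p(t+1) × n` matrix obtained by stacking the blocks `σ(0)C, σ(1)CA, …, σ(t)CAᵗ`. -/
def obsMatrixN {n p : ℕ} (A : Matrix (Fin n) (Fin n) ℝ) (C : Matrix (Fin p) (Fin n) ℝ)
    (σ : ℕ → ℝ) (t : ℕ) : Matrix (Fin (t + 1) × Fin p) (Fin n) ℝ :=
  Matrix.of fun ij k => σ (ij.1 : ℕ) * (C * A ^ (ij.1 : ℕ)) ij.2 k

/-- If `σ₁ ⪯ σ₂` (as switching signals of length `T+1`) and the initial state can be estimated
under `σ₁` by some time `t₁ ≤ T` (i.e. `O_{σ₁}(t₁)` has full column rank `n`), then it can also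
be estimated under `σ₂`, and the least estimation time satisfies `t_{σ₂} ≤ t_{σ₁}`. -/
theorem estimation_time_antitone {n p T : ℕ}
    (A : Matrix (Fin n) (Fin n) ℝ) (C : Matrix (Fin p) (Fin n) ℝ)
    (σ₁ σ₂ : ℕ → ℝ)
    (hσ₁ : ∀ i ≤ T, σ₁ i = 0 ∨ σ₁ i = 1) (hσ₂ : ∀ i ≤ T, σ₂ i = 0 ∨ σ₂ i = 1)
    (hle : ∀ i ≤ T, σ₁ i ≤ σ₂ i)
    (hex₁ : ∃ t, t ≤ T ∧ (obsMatrixN A C σ₁ t).rank = n) :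
    ∃ hex₂ : ∃ t, t ≤ T ∧ (obsMatrixN A C σ₂ t).rank = n,
      Nat.find hex₂ ≤ Nat.find hex₁ := by
  have key : ∀ t, t ≤ T → (obsMatrixN A C σ₁ t).rank = n → (obsMatrixN A C σ₂ t).rank = n := by
    intro t ht h
    have hfac : obsMatrixN A C σ₁ t =
        Matrix.diagonal (fun ij : Fin (t + 1) × Fin p => σ₁ (ij.1 : ℕ)) * obsMatrixN A C σ₂ t := by
      ext ij k
      have hi : (ij.1 : ℕ) ≤ T := by have := ij.1.isLt; omega
      rw [Matrix.diagonal_mul]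
      simp only [obsMatrixN, Matrix.of_apply]
      have hl := hle _ hi
      rcases hσ₁ _ hi with h1 | h1
      · simp [h1]
      · rcases hσ₂ _ hi with h2 | h2
        · rw [h1, h2] at hl
          norm_num at hl
        · simp [h1, h2]
    apply le_antisymm
    · simpa using Matrix.rank_le_card_width (obsMatrixN A C σ₂ t)
    · calc n = (obsMatrixN A C σ₁ t).rank := h.symm
        _ ≤ (obsMatrixN A C σ₂ t).rank := by
          rw [hfac]
          exact Matrix.rank_mul_le_right _ _
  have hs := Nat.find_spec hex₁
  exact ⟨⟨_, hs.1, key _ hs.1 hs.2⟩, Nat.find_min' _ ⟨hs.1, key _ hs.1 hs.2⟩⟩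
end

section
/- Let σ₁, σ₂ be switching signals of length T+1 with σ₁ ⪯ σ₂, and let x(0) ∈ ℝⁿ. Suppose there exist t₁ ≤ T and an input sequence u(0),…,u(t₁) with ‖u(i)‖_∞ ≤ 1 for all i such that A^{t₁+1}x(0) + Σ_{i=0}^{t₁} σ₁(i) A^{t₁−i} B u(i) = 0, and let t_{σ₁} be the least such time. Then the origin can be reached from x(0) under σ₂ by some time t ≤ t_{σ₁} with an input satisfying the same bound ‖u(i)‖_∞ ≤ 1, i.e., the optimal transfer time satisfies t_{σ₂} ≤ t_{σ₁}. -/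
open Matrix
open scoped Classical

/-- `steersToZero A B σ x₀ t` says that there is an input sequence `u(0), …, u(t)` with
`‖u(i)‖_∞ ≤ 1` driving the state from `x₀` to the origin at time `t+1` under the switching
signal `σ`, i.e. `A^{t+1} x₀ + Σ_{i=0}^{t} σ(i) A^{t-i} B u(i) = 0`. -/
def steersToZero {n m : ℕ} (A : Matrix (Fin n) (Fin n) ℝ) (B : Matrix (Fin n) (Fin m) ℝ)
    (σ : ℕ → ℝ) (x₀ : Fin n → ℝ) (t : ℕ) : Prop :=
  ∃ u : Fin (t + 1) → Fin m → ℝ, (∀ i j, |u i j| ≤ 1) ∧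
    (A ^ (t + 1)) *ᵥ x₀ + ∑ i : Fin (t + 1), σ (i : ℕ) • ((A ^ (t - (i : ℕ)) * B) *ᵥ u i) = 0

/-- If `σ₁ ⪯ σ₂` (as switching signals of length `T+1`) and the state can be driven from `x₀`
to the origin under `σ₁` by some time `t₁ ≤ T` using inputs with `‖u(i)‖_∞ ≤ 1`, then the same
is possible under `σ₂`, and the optimal transfer time satisfies `t_{σ₂} ≤ t_{σ₁}`. -/
theorem transfer_time_antitone {n m T : ℕ}
    (A : Matrix (Fin n) (Fin n) ℝ) (B : Matrix (Fin n) (Fin m) ℝ)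
    (σ₁ σ₂ : ℕ → ℝ)
    (hσ₁ : ∀ i ≤ T, σ₁ i = 0 ∨ σ₁ i = 1) (hσ₂ : ∀ i ≤ T, σ₂ i = 0 ∨ σ₂ i = 1)
    (hle : ∀ i ≤ T, σ₁ i ≤ σ₂ i)
    (x₀ : Fin n → ℝ)
    (hex₁ : ∃ t, t ≤ T ∧ steersToZero A B σ₁ x₀ t) :
    ∃ hex₂ : ∃ t, t ≤ T ∧ steersToZero A B σ₂ x₀ t,
      Nat.find hex₂ ≤ Nat.find hex₁ := by
  have key : ∀ t, t ≤ T → steersToZero A B σ₁ x₀ t → steersToZero A B σ₂ x₀ t := by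
    rintro t ht ⟨u, hu, h⟩
    refine ⟨fun i => σ₁ (i : ℕ) • u i, ?_, ?_⟩
    · intro i j
      have hi : (i : ℕ) ≤ T := by have := i.2; omega
      rcases hσ₁ i hi with h0 | h1
      · simp [h0]
      · simpa [h1] using hu i j
    · rw [← h]
      congr 1
      refine Finset.sum_congr rfl fun i _ => ?_
      have hi : (i : ℕ) ≤ T := by have := i.2; omega
      rcases hσ₁ i hi with h0 | h1
      · simp [h0]
      · have h2 : σ₂ (i : ℕ) = 1 := by
          have hl := hle i hi
          rcases hσ₂ i hi with h0 | h2
          · rw [h0, h1] at hl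
            norm_num at hl
          · exact h2
        simp [h1, h2]
  have hs := Nat.find_spec hex₁
  have h2 := And.intro hs.1 (key _ hs.1 hs.2)
  exact ⟨⟨_, h2⟩, Nat.find_min' _ h2⟩
end

section
/- Let σ₁, σ₂ be switching signals of length t+1 with σ₁ ⪯ σ₂, and let x_f ∈ ℝⁿ. If the set U₁ = {ū = (u(0),…,u(t)) : x_f = Σ_{i=0}^{t} σ₁(i) A^{t−i} B u(i)} is nonempty, then the set U₂ defined analogously for σ₂ is nonempty and inf_{ū ∈ U₂} ‖ū‖₁ ≤ inf_{ū ∈ U₁} ‖ū‖₁, where ‖ū‖₁ = Σ_{i=0}^{t} Σ_{j=1}^{m} |u_j(i)| is the total fuel. (The minimum fuel required for a state transfer is antitone in the partial order on switching signals.) -/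
open Matrix

/-- The state `Σ_{i=0}^{t} σ(i) A^{t-i} B u(i)` reached from the origin at time `t+1`
under the switching signal `σ` with input sequence `u(0), …, u(t)`. -/
def reachState {n m t : ℕ} (A : Matrix (Fin n) (Fin n) ℝ) (B : Matrix (Fin n) (Fin m) ℝ)
    (σ : Fin (t + 1) → ℝ) (u : Fin (t + 1) → Fin m → ℝ) : Fin n → ℝ :=
  ∑ i : Fin (t + 1), σ i • ((A ^ (t - (i : ℕ)) * B) *ᵥ u i)

/-- If `σ₁ ⪯ σ₂` and the state transfer from the origin to `x_f` at time `t+1` is feasible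
under `σ₁`, then it is feasible under `σ₂` and the minimum fuel (the infimum of the ℓ¹-norms
of feasible stacked inputs) under `σ₂` is at most that under `σ₁`. -/
theorem min_fuel_antitone {n m t : ℕ}
    (A : Matrix (Fin n) (Fin n) ℝ) (B : Matrix (Fin n) (Fin m) ℝ)
    (σ₁ σ₂ : Fin (t + 1) → ℝ)
    (hσ₁ : ∀ i, σ₁ i = 0 ∨ σ₁ i = 1) (hσ₂ : ∀ i, σ₂ i = 0 ∨ σ₂ i = 1)
    (hle : ∀ i, σ₁ i ≤ σ₂ i)
    (xf : Fin n → ℝ)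
    (hfeas : ∃ u : Fin (t + 1) → Fin m → ℝ, reachState A B σ₁ u = xf) :
    (∃ u : Fin (t + 1) → Fin m → ℝ, reachState A B σ₂ u = xf) ∧
      sInf {r : ℝ | ∃ u : Fin (t + 1) → Fin m → ℝ,
          reachState A B σ₂ u = xf ∧ r = ∑ i : Fin (t + 1), ∑ j : Fin m, |u i j|} ≤
        sInf {r : ℝ | ∃ u : Fin (t + 1) → Fin m → ℝ,
          reachState A B σ₁ u = xf ∧ r = ∑ i : Fin (t + 1), ∑ j : Fin m, |u i j|} := by
  have key : ∀ u : Fin (t + 1) → Fin m → ℝ, reachState A B σ₁ u = xf →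
      reachState A B σ₂ (fun i => σ₁ i • u i) = xf := by
    intro u hu
    rw [← hu]
    unfold reachState
    refine Finset.sum_congr rfl fun i _ => ?_
    rw [Matrix.mulVec_smul, smul_smul]
    congr 1
    have h := hle i
    rcases hσ₁ i with h1 | h1 <;> rcases hσ₂ i with h2 | h2 <;> rw [h1, h2] at h ⊢ <;> linarith
  obtain ⟨u₀, hu₀⟩ := hfeas
  refine ⟨⟨_, key u₀ hu₀⟩, ?_⟩
  refine le_csInf ⟨_, u₀, hu₀, rfl⟩ ?_
  rintro r ⟨u, hu, rfl⟩
  refine le_trans (csInf_le ?_ (Exists.intro _ ⟨key u hu, rfl⟩)) ?_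
  · refine ⟨0, ?_⟩
    rintro r ⟨v, _, rfl⟩
    positivity
  · refine Finset.sum_le_sum fun i _ => Finset.sum_le_sum fun j _ => ?_
    rcases hσ₁ i with h1 | h1 <;> simp [h1]
end

section
/- Let σ₁, σ₂ be switching signals of length t+1 with σ₁ ⪯ σ₂, let x_f ∈ ℝⁿ, and let γ₁, γ₂ ≥ 0. If the set U₁ = {ū = (u(0),…,u(t)) : x_f = Σ_{i=0}^{t} σ₁(i) A^{t−i} B u(i)} is nonempty, then the analogous set U₂ for σ₂ is nonempty and inf_{ū ∈ U₂} (γ₁‖ū‖₁ + γ₂‖ū‖₂) ≤ inf_{ū ∈ U₁} (γ₁‖ū‖₁ + γ₂‖ū‖₂). (The optimal mixed fuel–energy cost is antitone in the partial order on switching signals.) -/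
open Matrix

/-- The mixed fuel–energy cost `γ₁‖ū‖₁ + γ₂‖ū‖₂` of the stacked input `ū = (u(0),…,u(t))`. -/
noncomputable def mixedCost {m t : ℕ} (γ₁ γ₂ : ℝ) (u : Fin (t + 1) → Fin m → ℝ) : ℝ :=
  γ₁ * (∑ i : Fin (t + 1), ∑ j : Fin m, |u i j|) +
    γ₂ * Real.sqrt (∑ i : Fin (t + 1), ∑ j : Fin m, (u i j) ^ 2)

/-- If `σ₁ ⪯ σ₂` and the state transfer from the origin to `x_f` at time `t+1` is feasible
under `σ₁`, then it is feasible under `σ₂` and the optimal mixed fuel–energy cost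
`γ₁‖ū‖₁ + γ₂‖ū‖₂` under `σ₂` is at most that under `σ₁`. -/
theorem mixed_fuel_energy_antitone {n m t : ℕ}
    (A : Matrix (Fin n) (Fin n) ℝ) (B : Matrix (Fin n) (Fin m) ℝ)
    (σ₁ σ₂ : Fin (t + 1) → ℝ)
    (hσ₁ : ∀ i, σ₁ i = 0 ∨ σ₁ i = 1) (hσ₂ : ∀ i, σ₂ i = 0 ∨ σ₂ i = 1)
    (hle : ∀ i, σ₁ i ≤ σ₂ i)
    (xf : Fin n → ℝ) (γ₁ γ₂ : ℝ) (hγ₁ : 0 ≤ γ₁) (hγ₂ : 0 ≤ γ₂)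
    (hfeas : ∃ u : Fin (t + 1) → Fin m → ℝ, reachState A B σ₁ u = xf) :
    (∃ u : Fin (t + 1) → Fin m → ℝ, reachState A B σ₂ u = xf) ∧
      sInf {r : ℝ | ∃ u : Fin (t + 1) → Fin m → ℝ,
          reachState A B σ₂ u = xf ∧ r = mixedCost γ₁ γ₂ u} ≤
        sInf {r : ℝ | ∃ u : Fin (t + 1) → Fin m → ℝ,
          reachState A B σ₁ u = xf ∧ r = mixedCost γ₁ γ₂ u} := by
  have key : ∀ u : Fin (t + 1) → Fin m → ℝ, reachState A B σ₁ u = xf →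
      ∃ v : Fin (t + 1) → Fin m → ℝ, reachState A B σ₂ v = xf ∧
        mixedCost γ₁ γ₂ v ≤ mixedCost γ₁ γ₂ u := by
    intro u hu
    refine ⟨fun i => σ₁ i • u i, ?_, ?_⟩
    · rw [← hu]
      unfold reachState
      refine Finset.sum_congr rfl fun i _ => ?_
      have h : σ₂ i * σ₁ i = σ₁ i := by
        have := hle i
        rcases hσ₁ i with h1 | h1 <;> rcases hσ₂ i with h2 | h2 <;> rw [h1, h2] at this ⊢ <;>
          linarith
      rw [Matrix.mulVec_smul, smul_smul, h]
    · unfold mixedCost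
      have h1 : ∀ i j, |(σ₁ i • u i) j| ≤ |u i j| := by
        intro i j
        rcases hσ₁ i with h | h <;> simp [h]
      have h2 : ∀ i j, ((σ₁ i • u i) j) ^ 2 ≤ (u i j) ^ 2 := fun i j => sq_le_sq.mpr (h1 i j)
      refine add_le_add (mul_le_mul_of_nonneg_left ?_ hγ₁) (mul_le_mul_of_nonneg_left ?_ hγ₂)
      · exact Finset.sum_le_sum fun i _ => Finset.sum_le_sum fun j _ => h1 i j
      · exact Real.sqrt_le_sqrt
          (Finset.sum_le_sum fun i _ => Finset.sum_le_sum fun j _ => h2 i j)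
  obtain ⟨u₀, hu₀⟩ := hfeas
  refine ⟨(key u₀ hu₀).imp fun _ h => h.1, ?_⟩
  refine le_csInf ⟨_, u₀, hu₀, rfl⟩ ?_
  rintro r ⟨u, hu, rfl⟩
  obtain ⟨v, hv, hc⟩ := key u hu
  refine le_trans (csInf_le ⟨0, ?_⟩ ⟨v, hv, rfl⟩) hc
  rintro r ⟨w, _, rfl⟩
  unfold mixedCost
  positivity
end

section
/- Let σ₁, σ₂ be switching signals of length t+1 with σ₁ ⪯ σ₂, and suppose the Gramians W_{σ₁}(t) and W_{σ₂}(t) are both positive definite (hence invertible). Then the ellipsoid E₁ = {x ∈ ℝⁿ : xᵀ W_{σ₁}(t)⁻¹ x ≤ 1} is contained in the ellipsoid E₂ = {x ∈ ℝⁿ : xᵀ W_{σ₂}(t)⁻¹ x ≤ 1}. (The unit-energy reachable ellipsoid grows with the switching signal in the partial order.) -/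
open Matrix

/-- The controllability Gramian `W_σ(t) = Σ_{i=0}^{t} σ(i) A^{t-i} B Bᵀ (Aᵀ)^{t-i}`
of the pair `(A, B)` under the switching signal `σ`. -/
def gramian {n m t : ℕ} (A : Matrix (Fin n) (Fin n) ℝ) (B : Matrix (Fin n) (Fin m) ℝ)
    (σ : Fin (t + 1) → ℝ) : Matrix (Fin n) (Fin n) ℝ :=
  ∑ i : Fin (t + 1), σ i • (A ^ (t - (i : ℕ)) * B * Bᵀ * (Aᵀ) ^ (t - (i : ℕ)))

theorem gramian_diff_posSemidef {n m t : ℕ}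
    (A : Matrix (Fin n) (Fin n) ℝ) (B : Matrix (Fin n) (Fin m) ℝ)
    (σ₁ σ₂ : Fin (t + 1) → ℝ) (hle : ∀ i, σ₁ i ≤ σ₂ i) :
    (gramian A B σ₂ - gramian A B σ₁).PosSemidef := by
  unfold gramian
  rw [← Finset.sum_sub_distrib]
  refine Matrix.posSemidef_sum _ fun i _ => ?_
  rw [← sub_smul]
  refine Matrix.PosSemidef.smul ?_ (sub_nonneg.2 (hle i))
  have h := Matrix.posSemidef_self_mul_conjTranspose (A ^ (t - (i : ℕ)) * B)
  rw [Matrix.conjTranspose_eq_transpose_of_trivial, Matrix.transpose_mul,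
    Matrix.transpose_pow, ← Matrix.mul_assoc] at h
  exact h

theorem inv_quad_anti {n : ℕ} (P Q : Matrix (Fin n) (Fin n) ℝ) (hP : P.PosDef) (hQ : Q.PosDef)
    (h : (Q - P).PosSemidef) (x : Fin n → ℝ) :
    x ⬝ᵥ (Q⁻¹ *ᵥ x) ≤ x ⬝ᵥ (P⁻¹ *ᵥ x) := by
  have hz : P *ᵥ (P⁻¹ *ᵥ x) = x := by
    rw [Matrix.mulVec_mulVec, Matrix.mul_nonsing_inv _ (P.isUnit_iff_isUnit_det.1 hP.isUnit),
      Matrix.one_mulVec]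
  have hy : Q *ᵥ (Q⁻¹ *ᵥ x) = x := by
    rw [Matrix.mulVec_mulVec, Matrix.mul_nonsing_inv _ (Q.isUnit_iff_isUnit_det.1 hQ.isUnit),
      Matrix.one_mulVec]
  generalize P⁻¹ *ᵥ x = z at *
  generalize Q⁻¹ *ᵥ x = y at *
  have h1 := h.dotProduct_mulVec_nonneg y
  have h2 := hP.posSemidef.dotProduct_mulVec_nonneg (z - y)
  have hsymm : z ⬝ᵥ (P *ᵥ y) = x ⬝ᵥ y := by
    have hT : Pᵀ = P := by
      have := hP.isHermitian.eq
      rwa [Matrix.conjTranspose_eq_transpose_of_trivial] at this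
    rw [Matrix.dotProduct_mulVec, ← Matrix.mulVec_transpose, hT, hz]
  simp only [star_trivial, Matrix.sub_mulVec, Matrix.mulVec_sub, dotProduct_sub,
    sub_dotProduct, hz, hy, hsymm] at h1 h2
  rw [dotProduct_comm z x, dotProduct_comm y x] at h2
  rw [dotProduct_comm y x] at h1
  linarith

/-- If `σ₁ ⪯ σ₂` and the Gramians `W_{σ₁}(t)`, `W_{σ₂}(t)` are positive definite, then the
unit-energy reachable ellipsoid `{x : xᵀ W_{σ₁}(t)⁻¹ x ≤ 1}` is contained in
`{x : xᵀ W_{σ₂}(t)⁻¹ x ≤ 1}`. -/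
theorem reachable_ellipsoid_mono {n m t : ℕ}
    (A : Matrix (Fin n) (Fin n) ℝ) (B : Matrix (Fin n) (Fin m) ℝ)
    (σ₁ σ₂ : Fin (t + 1) → ℝ)
    (hσ₁ : ∀ i, σ₁ i = 0 ∨ σ₁ i = 1) (hσ₂ : ∀ i, σ₂ i = 0 ∨ σ₂ i = 1)
    (hle : ∀ i, σ₁ i ≤ σ₂ i)
    (hW₁ : (gramian A B σ₁).PosDef) (hW₂ : (gramian A B σ₂).PosDef) :
    {x : Fin n → ℝ | x ⬝ᵥ ((gramian A B σ₁)⁻¹ *ᵥ x) ≤ 1} ⊆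
      {x : Fin n → ℝ | x ⬝ᵥ ((gramian A B σ₂)⁻¹ *ᵥ x) ≤ 1} := by
  intro x hx
  exact (inv_quad_anti _ _ hW₁ hW₂ (gramian_diff_posSemidef A B σ₁ σ₂ hle) x).trans hx
end

section
/- Let A be an n×n real matrix, B an n×m real matrix, Q a symmetric positive semidefinite n×n matrix, and R a symmetric positive definite m×m matrix. Define the Riccati update map Ric(P) = Q + AᵀPA − AᵀPB(R + BᵀPB)⁻¹BᵀPA on symmetric positive semidefinite matrices P (which is well defined since R + BᵀPB is positive definite). Then Ric is monotone with respect to the Loewner order: if 0 ⪯ P₂ ⪯ P₁, then Ric(P₂) ⪯ Ric(P₁). Moreover, for every positive semidefinite P, Ric(P) ⪯ Q + AᵀPA. -/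
open Matrix

/-- The one-step discrete-time Riccati update
`Ric(P) = Q + AᵀPA − AᵀPB(R + BᵀPB)⁻¹BᵀPA` of the finite-horizon LQR problem. -/
noncomputable def ricMap {n m : ℕ} (A : Matrix (Fin n) (Fin n) ℝ) (B : Matrix (Fin n) (Fin m) ℝ)
    (Q : Matrix (Fin n) (Fin n) ℝ) (R : Matrix (Fin m) (Fin m) ℝ)
    (P : Matrix (Fin n) (Fin n) ℝ) : Matrix (Fin n) (Fin n) ℝ :=
  Q + Aᵀ * P * A - Aᵀ * P * B * (R + Bᵀ * P * B)⁻¹ * (Bᵀ * P * A)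

lemma ric_S_posDef {n m : ℕ} (B : Matrix (Fin n) (Fin m) ℝ)
    {R : Matrix (Fin m) (Fin m) ℝ} (hR : R.PosDef)
    {P : Matrix (Fin n) (Fin n) ℝ} (hP : P.PosSemidef) : (R + Bᵀ * P * B).PosDef := by
  have h := hP.conjTranspose_mul_mul_same B
  rw [conjTranspose_eq_transpose_of_trivial] at h
  exact hR.add_posSemidef h

/-- Completion of squares for the Riccati map. -/
lemma ric_complete_square {n m : ℕ} (A : Matrix (Fin n) (Fin n) ℝ) (B : Matrix (Fin n) (Fin m) ℝ)
    (Q : Matrix (Fin n) (Fin n) ℝ) (R : Matrix (Fin m) (Fin m) ℝ) (hR : R.PosDef)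
    (P : Matrix (Fin n) (Fin n) ℝ) (hP : P.PosSemidef) (K : Matrix (Fin m) (Fin n) ℝ) :
    Q + Kᵀ * R * K + (A - B * K)ᵀ * P * (A - B * K) =
      ricMap A B Q R P + (K - (R + Bᵀ * P * B)⁻¹ * (Bᵀ * P * A))ᵀ * (R + Bᵀ * P * B) *
        (K - (R + Bᵀ * P * B)⁻¹ * (Bᵀ * P * A)) := by
  have hS := ric_S_posDef B hR hP
  have hPt : Pᵀ = P := by simpa using hP.isHermitian.eq
  have hSt : (R + Bᵀ * P * B)ᵀ = R + Bᵀ * P * B := by simpa using hS.isHermitian.eq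
  have hdet := (Matrix.isUnit_iff_isUnit_det _).1 hS.isUnit
  have hG : (Bᵀ * P * A)ᵀ = Aᵀ * P * B := by
    simp [transpose_mul, hPt, Matrix.mul_assoc]
  have hJ : Q + Kᵀ * R * K + (A - B * K)ᵀ * P * (A - B * K) =
      Q + Aᵀ * P * A + Kᵀ * (R + Bᵀ * P * B) * K - Kᵀ * (Bᵀ * P * A) - Aᵀ * P * B * K := by
    simp only [transpose_sub, transpose_mul, Matrix.mul_add, Matrix.add_mul, Matrix.mul_sub,
      Matrix.sub_mul, Matrix.mul_assoc]
    abel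
  rw [hJ, ricMap]
  simp only [transpose_sub, transpose_mul (R + Bᵀ * P * B)⁻¹, hG, transpose_nonsing_inv, hSt]
  generalize R + Bᵀ * P * B = S at *
  generalize Bᵀ * P * A = G at *
  generalize Aᵀ * P * B = H at *
  simp only [Matrix.mul_sub, Matrix.sub_mul, Matrix.mul_assoc,
    Matrix.mul_nonsing_inv_cancel_left _ _ hdet, Matrix.nonsing_inv_mul_cancel_left _ _ hdet]
  abel

/-- The Riccati update is monotone in the Loewner order: if `0 ⪯ P₂ ⪯ P₁` then
`Ric(P₂) ⪯ Ric(P₁)`; moreover `Ric(P) ⪯ Q + AᵀPA` for every positive semidefinite `P`. -/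
theorem ricMap_monotone {n m : ℕ}
    (A : Matrix (Fin n) (Fin n) ℝ) (B : Matrix (Fin n) (Fin m) ℝ)
    (Q : Matrix (Fin n) (Fin n) ℝ) (R : Matrix (Fin m) (Fin m) ℝ)
    (hQ : Q.PosSemidef) (hR : R.PosDef)
    (P₁ P₂ : Matrix (Fin n) (Fin n) ℝ)
    (hP₁ : P₁.PosSemidef) (hP₂ : P₂.PosSemidef) (h21 : (P₁ - P₂).PosSemidef) :
    (ricMap A B Q R P₁ - ricMap A B Q R P₂).PosSemidef ∧
      ∀ P : Matrix (Fin n) (Fin n) ℝ, P.PosSemidef →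
        (Q + Aᵀ * P * A - ricMap A B Q R P).PosSemidef := by
  constructor
  · have e1 := ric_complete_square A B Q R hR P₁ hP₁ ((R + Bᵀ * P₁ * B)⁻¹ * (Bᵀ * P₁ * A))
    have e2 := ric_complete_square A B Q R hR P₂ hP₂ ((R + Bᵀ * P₁ * B)⁻¹ * (Bᵀ * P₁ * A))
    rw [sub_self, Matrix.mul_zero, add_zero] at e1
    generalize (R + Bᵀ * P₁ * B)⁻¹ * (Bᵀ * P₁ * A) = K at e1 e2
    have h1 := h21.conjTranspose_mul_mul_same (A - B * K)
    have h2 := (ric_S_posDef B hR hP₂).posSemidef.conjTranspose_mul_mul_same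
      (K - (R + Bᵀ * P₂ * B)⁻¹ * (Bᵀ * P₂ * A))
    rw [conjTranspose_eq_transpose_of_trivial] at h1 h2
    have h := h1.add h2
    convert h using 1
    rw [← e1, eq_sub_of_add_eq e2.symm, Matrix.mul_sub (A - B * K)ᵀ P₁ P₂, Matrix.sub_mul]
    abel
  · intro P hP
    have hPt : Pᵀ = P := by simpa using hP.isHermitian.eq
    have h := (ric_S_posDef B hR hP).inv.posSemidef.conjTranspose_mul_mul_same (Bᵀ * P * A)
    rw [conjTranspose_eq_transpose_of_trivial] at h
    have e : Q + Aᵀ * P * A - ricMap A B Q R P =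
        (Bᵀ * P * A)ᵀ * (R + Bᵀ * P * B)⁻¹ * (Bᵀ * P * A) := by
      unfold ricMap
      rw [sub_sub_cancel]
      simp [transpose_mul, hPt, Matrix.mul_assoc]
    rw [e]
    exact h
end

section
/- Let K(0),…,K(T−1) be m×n real matrices and suppose that for every t and every symmetric positive semidefinite n×n matrix M, (A + BK(t))ᵀ M (A + BK(t)) ⪯ Aᵀ M A (the closed-loop maps do not expand any quadratic form more than A does). Let Q, Q_f be symmetric positive semidefinite n×n matrices and R a symmetric positive semidefinite m×m matrix. For a switching signal σ of length T and initial state x(0) = x₀, let x(t+1) = (A + σ(t)BK(t))x(t) and define the cost J_σ(x₀) = x(T)ᵀQ_f x(T) + Σ_{t=0}^{T−1} x(t)ᵀ(Q + K(t)ᵀRK(t))x(t). If σ₁ ⪯ σ₂, then J_{σ₂}(x₀) ≤ J_{σ₁}(x₀) for every x₀ ∈ ℝⁿ. (The degraded cost of a fixed feedback law under packet dropouts is antitone in the partial order on switching signals.) -/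
open Matrix

/-- The closed-loop state trajectory `x(0) = x₀`, `x(t+1) = (A + σ(t)·B K(t)) x(t)`
obtained by applying the fixed feedback law `u(t) = K(t)x(t)` through a dropout channel
with switching signal `σ`. -/
def traj {n m : ℕ} (A : Matrix (Fin n) (Fin n) ℝ) (B : Matrix (Fin n) (Fin m) ℝ)
    (K : ℕ → Matrix (Fin m) (Fin n) ℝ) (σ : ℕ → ℝ) (x₀ : Fin n → ℝ) : ℕ → Fin n → ℝ
  | 0 => x₀
  | t + 1 => (A + σ t • (B * K t)) *ᵥ traj A B K σ x₀ t

/-- The degraded LQR cost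
`J_σ(x₀) = x(T)ᵀ Q_f x(T) + Σ_{t=0}^{T-1} x(t)ᵀ (Q + K(t)ᵀ R K(t)) x(t)`
of the fixed feedback law `K` under the dropout signal `σ`. -/
def dropCost {n m : ℕ} (A : Matrix (Fin n) (Fin n) ℝ) (B : Matrix (Fin n) (Fin m) ℝ)
    (Q Qf : Matrix (Fin n) (Fin n) ℝ) (R : Matrix (Fin m) (Fin m) ℝ)
    (K : ℕ → Matrix (Fin m) (Fin n) ℝ) (T : ℕ) (σ : ℕ → ℝ) (x₀ : Fin n → ℝ) : ℝ :=
  traj A B K σ x₀ T ⬝ᵥ (Qf *ᵥ traj A B K σ x₀ T) +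
    ∑ t ∈ Finset.range T,
      traj A B K σ x₀ t ⬝ᵥ ((Q + (K t)ᵀ * R * K t) *ᵥ traj A B K σ x₀ t)

theorem dropCost_succ {n m : ℕ} (A : Matrix (Fin n) (Fin n) ℝ) (B : Matrix (Fin n) (Fin m) ℝ)
    (Q Qf : Matrix (Fin n) (Fin n) ℝ) (R : Matrix (Fin m) (Fin m) ℝ)
    (K : ℕ → Matrix (Fin m) (Fin n) ℝ) (T : ℕ) (σ : ℕ → ℝ) (x₀ : Fin n → ℝ) :
    dropCost A B Q Qf R K (T + 1) σ x₀ =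
      dropCost A B Q ((A + σ T • (B * K T))ᵀ * Qf * (A + σ T • (B * K T)) +
        (Q + (K T)ᵀ * R * K T)) R K T σ x₀ := by
  unfold dropCost
  rw [Finset.sum_range_succ, traj, Matrix.add_mulVec _ (Q + (K T)ᵀ * R * K T), dotProduct_add,
    ← Matrix.mulVec_mulVec, ← Matrix.mulVec_mulVec, Matrix.dotProduct_mulVec _ (_ᵀ),
    Matrix.vecMul_transpose]
  ring

theorem dropCost_mono_aux {n m : ℕ}
    (A : Matrix (Fin n) (Fin n) ℝ) (B : Matrix (Fin n) (Fin m) ℝ)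
    (Q : Matrix (Fin n) (Fin n) ℝ) (R : Matrix (Fin m) (Fin m) ℝ)
    (K : ℕ → Matrix (Fin m) (Fin n) ℝ)
    (hQ : Q.PosSemidef) (hR : R.PosSemidef)
    (σ₁ σ₂ : ℕ → ℝ) (x₀ : Fin n → ℝ) (T : ℕ)
    (hK : ∀ t < T, ∀ M : Matrix (Fin n) (Fin n) ℝ, M.PosSemidef →
      (Aᵀ * M * A - (A + B * K t)ᵀ * M * (A + B * K t)).PosSemidef)
    (hσ₁ : ∀ t < T, σ₁ t = 0 ∨ σ₁ t = 1) (hσ₂ : ∀ t < T, σ₂ t = 0 ∨ σ₂ t = 1)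
    (hle : ∀ t < T, σ₁ t ≤ σ₂ t) :
    ∀ Q₁ Q₂ : Matrix (Fin n) (Fin n) ℝ, Q₂.PosSemidef → (Q₁ - Q₂).PosSemidef →
      dropCost A B Q Q₂ R K T σ₂ x₀ ≤ dropCost A B Q Q₁ R K T σ₁ x₀ := by
  induction T with
  | zero =>
    intro Q₁ Q₂ _ h
    have := h.dotProduct_mulVec_nonneg x₀
    simp only [Matrix.sub_mulVec, dotProduct_sub, star_trivial] at this
    simp only [dropCost, traj, Finset.range_zero, Finset.sum_empty, add_zero]
    linarith
  | succ T ih =>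
    intro Q₁ Q₂ h₂ h
    rw [dropCost_succ, dropCost_succ]
    have cong : ∀ {k l : ℕ} (M : Matrix (Fin k) (Fin k) ℝ) (F : Matrix (Fin k) (Fin l) ℝ),
        M.PosSemidef → (Fᵀ * M * F).PosSemidef := by
      intro k l M F hM
      have := hM.conjTranspose_mul_mul_same F
      rwa [Matrix.conjTranspose_eq_transpose_of_trivial] at this
    refine ih (fun t ht => hK t (by omega)) (fun t ht => hσ₁ t (by omega))
      (fun t ht => hσ₂ t (by omega)) (fun t ht => hle t (by omega)) _ _ ?_ ?_
    · exact (cong _ _ h₂).add (hQ.add (cong _ _ hR))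
    · have key : ((A + σ₁ T • (B * K T))ᵀ * Q₂ * (A + σ₁ T • (B * K T)) -
          (A + σ₂ T • (B * K T))ᵀ * Q₂ * (A + σ₂ T • (B * K T))).PosSemidef := by
        have hl := hle T (by omega)
        rcases hσ₁ T (by omega) with h1 | h1 <;> rcases hσ₂ T (by omega) with h2 | h2
        · rw [h1, h2, sub_self]; exact Matrix.PosSemidef.zero
        · rw [h1, h2, zero_smul, one_smul, add_zero]; exact hK T (by omega) _ h₂
        · rw [h1, h2] at hl; norm_num at hl
        · rw [h1, h2, sub_self]; exact Matrix.PosSemidef.zero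
      have := (cong _ (A + σ₁ T • (B * K T)) h).add key
      convert this using 1
      rw [Matrix.mul_sub, Matrix.sub_mul]
      abel

/-- Suppose the closed-loop maps `A + B K(t)` do not expand any positive semidefinite
quadratic form more than `A` does. Then the degraded cost of the fixed feedback law under
packet dropouts is antitone in the partial order on switching signals: if `σ₁ ⪯ σ₂` then
`J_{σ₂}(x₀) ≤ J_{σ₁}(x₀)` for every initial state `x₀`. -/
theorem fixed_feedback_cost_antitone {n m T : ℕ}
    (A : Matrix (Fin n) (Fin n) ℝ) (B : Matrix (Fin n) (Fin m) ℝ)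
    (Q Qf : Matrix (Fin n) (Fin n) ℝ) (R : Matrix (Fin m) (Fin m) ℝ)
    (K : ℕ → Matrix (Fin m) (Fin n) ℝ)
    (hQ : Q.PosSemidef) (hQf : Qf.PosSemidef) (hR : R.PosSemidef)
    (hK : ∀ t < T, ∀ M : Matrix (Fin n) (Fin n) ℝ, M.PosSemidef →
      (Aᵀ * M * A - (A + B * K t)ᵀ * M * (A + B * K t)).PosSemidef)
    (σ₁ σ₂ : ℕ → ℝ)
    (hσ₁ : ∀ t < T, σ₁ t = 0 ∨ σ₁ t = 1) (hσ₂ : ∀ t < T, σ₂ t = 0 ∨ σ₂ t = 1)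
    (hle : ∀ t < T, σ₁ t ≤ σ₂ t) :
    ∀ x₀ : Fin n → ℝ,
      dropCost A B Q Qf R K T σ₂ x₀ ≤ dropCost A B Q Qf R K T σ₁ x₀ := by
  exact fun x₀ => dropCost_mono_aux A B Q R K hQ hR σ₁ σ₂ x₀ T hK hσ₁ hσ₂ hle Qf Qf hQf
    (by rw [sub_self]; exact Matrix.PosSemidef.zero)
end

section
/- Fix k ≥ 1 and T ∈ ℕ, and consider the constraint of at most k consecutive dropouts. A binary signal σ : {0,…,T−1} → {0,1} is minimal if and only if σ is admissible and every index i with σ(i) = 1 is surrounded by at least k zeros, i.e., p(i) + q(i) ≥ k, where p(i) is the number of consecutive indices immediately preceding i on which σ is 0 and q(i) is the number of consecutive indices immediately following i on which σ is 0. -/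
/-- A binary signal `σ` of length `T` is admissible for the constraint of at most `k`
consecutive dropouts if every block of `k+1` consecutive indices in `{0,…,T−1}` contains
an index where `σ` is `1` (i.e. there is no block of `k+1` consecutive zeros). -/
def IsAdmissible (k T : ℕ) (σ : Fin T → Bool) : Prop :=
  ∀ i : ℕ, (h : i + k < T) → ∃ j : ℕ, ∃ hj : j ≤ k, σ ⟨i + j, by omega⟩ = true

/-- A signal `σ` is minimal if it is admissible and no admissible signal `σ' ≠ σ` satisfies
`σ' ⪯ σ` (where `σ' ⪯ σ` means `σ'(i) = 1` implies `σ(i) = 1` for all `i`). -/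
def IsMinimal (k T : ℕ) (σ : Fin T → Bool) : Prop :=
  IsAdmissible k T σ ∧
    ∀ σ' : Fin T → Bool, IsAdmissible k T σ' → (∀ i, σ' i = true → σ i = true) → σ' = σ

/-- A `1`-bit at index `i` of `σ` is surrounded by at least `k` zeros: there are `p`
consecutive zeros immediately preceding `i` and `q` consecutive zeros immediately following
`i` with `p + q ≥ k`; equivalently `p(i) + q(i) ≥ k` for the maximal such runs. -/
def SurroundedBy (k T : ℕ) (σ : Fin T → Bool) (i : Fin T) : Prop :=
  ∃ p q : ℕ, k ≤ p + q ∧ p ≤ (i : ℕ) ∧ ∃ _h : (i : ℕ) + q < T,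
    (∀ j : ℕ, 1 ≤ j → j ≤ p → σ ⟨(i : ℕ) - j, by omega⟩ = false) ∧
    (∀ j : ℕ, (h1 : 1 ≤ j) → (h2 : j ≤ q) → σ ⟨(i : ℕ) + j, by omega⟩ = false)

/-- For the constraint of at most `k ≥ 1` consecutive dropouts, a binary signal of length `T`
is minimal if and only if it is admissible and every index `i` with `σ(i) = 1` is surrounded
by at least `k` zeros, i.e. `p(i) + q(i) ≥ k`. -/
theorem isMinimal_iff_surrounded (k T : ℕ) (hk : 1 ≤ k) (σ : Fin T → Bool) :
    IsMinimal k T σ ↔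
      IsAdmissible k T σ ∧ ∀ i : Fin T, σ i = true → SurroundedBy k T σ i := by
  constructor
  · rintro ⟨hadm, hmin⟩
    refine ⟨hadm, fun i hi => ?_⟩
    have hna : ¬ IsAdmissible k T (Function.update σ i false) := by
      intro h
      have h1 := hmin _ h (by
        intro j hj
        by_cases hji : j = i
        · subst hji; exact hi
        · rwa [Function.update_of_ne hji] at hj)
      have h2 := congrFun h1 i
      rw [Function.update_self, hi] at h2
      exact Bool.noConfusion h2
    unfold IsAdmissible at hna
    push Not at hna
    obtain ⟨a, ha, hz⟩ := hna
    -- away from `i`, the signal vanishes on the window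
    have hz' : ∀ m : ℕ, (hm : m < T) → a ≤ m → m ≤ a + k → m ≠ (i : ℕ) → σ ⟨m, hm⟩ = false := by
      intro m hm h1 h2 h3
      have h4 := hz (m - a) (by omega)
      have h5 : a + (m - a) = m := by omega
      simp only [h5] at h4
      rw [Function.update_of_ne (by intro h; apply h3; rw [← h])] at h4
      simpa using h4
    have hin : a ≤ (i : ℕ) ∧ (i : ℕ) ≤ a + k := by
      by_contra hcon
      obtain ⟨j, hj, hs⟩ := hadm a ha
      rw [hz' (a + j) (by omega) (by omega) (by omega) (by omega)] at hs
      exact Bool.noConfusion hs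
    refine ⟨(i : ℕ) - a, a + k - i, by omega, by omega, by omega, ?_, ?_⟩
    · intro j h1 h2
      exact hz' _ _ (by omega) (by omega) (by omega)
    · intro j h1 h2
      exact hz' _ _ (by omega) (by omega) (by omega)
  · rintro ⟨hadm, hsur⟩
    refine ⟨hadm, fun σ' hadm' hle => ?_⟩
    funext i
    by_contra hne
    have hi : σ i = true ∧ σ' i = false := by
      have := hle i
      cases h1 : σ i <;> cases h2 : σ' i <;> simp_all
    obtain ⟨p, q, hpq, hp, hq, hl, hr⟩ := hsur i hi.1
    obtain ⟨j, hj, hs⟩ := hadm' ((i : ℕ) - min p k) (by omega)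
    have hs2 := hle _ hs
    rcases lt_trichotomy ((i : ℕ) - min p k + j) (i : ℕ) with h | h | h
    · have h1 := hl (min p k - j) (by omega) (by omega)
      have h2 : (i : ℕ) - (min p k - j) = (i : ℕ) - min p k + j := by omega
      simp only [h2] at h1
      rw [h1] at hs2
      exact Bool.noConfusion hs2
    · simp only [h] at hs
      rw [hi.2] at hs
      exact Bool.noConfusion hs
    · have h1 := hr (j - min p k) (by omega) (by omega)
      have h2 : (i : ℕ) + (j - min p k) = (i : ℕ) - min p k + j := by omega
      simp only [h2] at h1
      rw [h1] at hs2
      exact Bool.noConfusion hs2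
end
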